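/- (Berndt–Chan evaluation, rewritten form.) One has ₂F₁(1/3, 2/3; 1; (3√3 − 5)/4) = (2√3)^{−1/4} · (√(√3 + 1) / (2π)^{3/2}) · Γ(1/4)², where Γ is the Gamma function. (The argument (3√3 − 5)/4 ≈ 0.049 lies in (0,1), so the hypergeometric series converges absolutely.) -/

import Mathlib

open Real

/-- Gauss hypergeometric function ₂F₁ defined via its power series
    (the tsum; converges absolutely for |z| < 1). -/
noncomputable def hyp2F1 (a b c z : ℝ) : ℝ :=
  ∑' n : ℕ, ((ascPochhammer ℝ n).eval a * (ascPochhammer ℝ n).eval b /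
      (ascPochhammer ℝ n).eval c) * z ^ n / (Nat.factorial n)

/-!
The average of `₂F₁(1/3, 2/3; 1/2; z cos² θ)` over a quarter period is `₂F₁(1/3, 2/3; 1; z)`, and
the averaged function is elementary: `₂F₁(1/3, 2/3; 1/2; sin² x) = cos (x/3) / cos x`. With
`sin x = √z cos θ` and `w = sin (x/3)` the average becomes the integral of
`dw / √(z - (3 w - 4 w³)²)`, that is, of `dv / √(v (z - v (3 - 4 v)²))` with `v = w²`. This
elliptic differential is the pullback of `dX / Y` under a degree `3` map to the curve
`Y² = X (1 - 27 (1 + 8 z) X² + 54 (8 z² + 20 z - 1) X³)`. The last term vanishes when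
`8 z² + 20 z = 1`, whose positive root is `z = (3 √3 - 5) / 4`, and then a rescaling of `√X` gives
the lemniscatic differential, whose quarter period is a Beta value.
-/

/-! ### The Gauss hypergeometric series -/

section Hypergeometric

variable {𝕂 : Type*} [RCLike 𝕂]

theorem one_le_radius_ordinaryHypergeometricSeries (a b c : 𝕂) :
    1 ≤ (ordinaryHypergeometricSeries 𝕂 a b c).radius := by
  by_cases h : ∀ k : ℕ, (k : 𝕂) ≠ -a ∧ (k : 𝕂) ≠ -b ∧ (k : 𝕂) ≠ -c
  · exact (ordinaryHypergeometricSeries_radius_eq_one 𝕂 a b c h).ge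
  · have hneg : ∃ k : ℕ, a = -(k : 𝕂) ∨ b = -(k : 𝕂) ∨ c = -(k : 𝕂) := by
      grind
    obtain ⟨k, rfl | rfl | rfl⟩ := hneg
    · simp [ordinaryHypergeometric_radius_top_of_neg_nat₁]
    · simp [ordinaryHypergeometric_radius_top_of_neg_nat₂]
    · simp [ordinaryHypergeometric_radius_top_of_neg_nat₃]

theorem summable_norm_ordinaryHypergeometricCoefficient_mul_pow (a b c : 𝕂) {r : ℝ}
    (hr₀ : 0 ≤ r) (hr₁ : r < 1) :
    Summable fun n ↦ ‖ordinaryHypergeometricCoefficient a b c n‖ * r ^ n := by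
  lift r to NNReal using hr₀
  have h := (ordinaryHypergeometricSeries 𝕂 a b c).summable_norm_mul_pow (r := r) <|
    (ENNReal.coe_lt_one_iff.2 (mod_cast hr₁)).trans_le
      (one_le_radius_ordinaryHypergeometricSeries a b c)
  simpa only [ordinaryHypergeometricSeries, FormalMultilinearSeries.ofScalars_norm] using h

theorem hasSum_ordinaryHypergeometric (a b c : 𝕂) {z : 𝕂} (hz : ‖z‖ < 1) :
    HasSum (fun n ↦ ordinaryHypergeometricCoefficient a b c n * z ^ n) (₂F₁ a b c z) := by
  have h := (summable_norm_ordinaryHypergeometricCoefficient_mul_pow a b c (norm_nonneg z) hz)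
  rw [ordinaryHypergeometric_eq_tsum]
  exact (Summable.of_norm (by simpa only [norm_mul, norm_pow] using h)).hasSum

theorem ordinaryHypergeometricCoefficient_succ (a b c : 𝕂) (n : ℕ) :
    (n + 1) * ordinaryHypergeometricCoefficient a b c (n + 1) =
      a * b / c * ordinaryHypergeometricCoefficient (a + 1) (b + 1) (c + 1) n := by
  have hn : (n + 1 : 𝕂) ≠ 0 := n.cast_add_one_ne_zero
  have hfact : (n.factorial : 𝕂) ≠ 0 := mod_cast n.factorial_ne_zero
  simp only [ordinaryHypergeometricCoefficient, ascPochhammer_succ_left, Polynomial.eval_mul,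
    Polynomial.eval_X, Polynomial.eval_comp, Polynomial.eval_add, Polynomial.eval_one,
    Nat.factorial_succ, Nat.cast_mul, Nat.cast_succ, mul_inv]
  field_simp

theorem hasDerivAt_ordinaryHypergeometric (a b c : 𝕂) {z : 𝕂} (hz : ‖z‖ < 1) :
    HasDerivAt (₂F₁ a b c) (a * b / c * ₂F₁ (a + 1) (b + 1) (c + 1) z) z := by
  set u := ordinaryHypergeometricCoefficient a b c
  set v := ordinaryHypergeometricCoefficient (a + 1) (b + 1) (c + 1)
  obtain ⟨r, hzr, hr⟩ := exists_between hz
  have hr₀ : 0 ≤ r := (norm_nonneg z).trans hzr.le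
  have hshift (n : ℕ) (y : 𝕂) :
      u (n + 1) * (((n + 1 : ℕ) : 𝕂) * y ^ (n + 1 - 1)) = a * b / c * (v n * y ^ n) := by
    have := ordinaryHypergeometricCoefficient_succ a b c n
    push_cast
    linear_combination y ^ n * this
  have hbound : Summable fun n ↦ ‖u n * (n * (r : 𝕂) ^ (n - 1))‖ := by
    rw [← summable_nat_add_iff 1]
    simp only [hshift, norm_mul, norm_pow, RCLike.norm_ofReal, abs_of_nonneg hr₀]
    exact (summable_norm_ordinaryHypergeometricCoefficient_mul_pow _ _ _ hr₀ hr).mul_left _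
  have hsum (y : 𝕂) (hy : y ∈ Metric.ball 0 r) : ₂F₁ a b c y = ∑' n, u n * y ^ n :=
    (hasSum_ordinaryHypergeometric a b c ((mem_ball_zero_iff.1 hy).trans hr)).tsum_eq.symm
  have hzmem : z ∈ Metric.ball (0 : 𝕂) r := mem_ball_zero_iff.2 hzr
  have hderiv := hasDerivAt_tsum_of_isPreconnected (g := fun n y ↦ u n * y ^ n)
    (g' := fun n y ↦ u n * (n * y ^ (n - 1))) hbound Metric.isOpen_ball
    (convex_ball (0 : 𝕂) r).isPreconnected (fun n y _ ↦ (hasDerivAt_pow n y).const_mul (u n))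
    (fun n y hy ↦ by
      simp only [norm_mul, norm_pow, RCLike.norm_ofReal, abs_of_nonneg hr₀]
      gcongr
      exact (mem_ball_zero_iff.1 hy).le)
    hzmem (hasSum_ordinaryHypergeometric a b c hz).summable hzmem
  refine (hderiv.congr_of_eventuallyEq ?_).congr_deriv ?_
  · filter_upwards [Metric.isOpen_ball.mem_nhds hzmem] with y hy using hsum y hy
  · have hv := (hasSum_ordinaryHypergeometric (a + 1) (b + 1) (c + 1) hz).mul_left (a * b / c)
    exact ((hasSum_nat_add_iff' 1).1 (by simpa only [hshift, Finset.range_one,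
      Finset.sum_singleton, Nat.cast_zero, zero_mul, mul_zero, sub_zero] using hv)).tsum_eq

theorem hasSum_deriv_ordinaryHypergeometric (a b c : 𝕂) {z : 𝕂} (hz : ‖z‖ < 1) :
    HasSum (fun n ↦ (n + 1) * ordinaryHypergeometricCoefficient a b c (n + 1) * z ^ n)
      (deriv (₂F₁ a b c) z) := by
  rw [(hasDerivAt_ordinaryHypergeometric a b c hz).deriv]
  simp only [ordinaryHypergeometricCoefficient_succ, mul_assoc (a * b / c)]
  exact (hasSum_ordinaryHypergeometric (a + 1) (b + 1) (c + 1) hz).mul_left _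

theorem hasSum_mul_deriv_ordinaryHypergeometric (a b c : 𝕂) {z : 𝕂} (hz : ‖z‖ < 1) :
    HasSum (fun n ↦ n * ordinaryHypergeometricCoefficient a b c n * z ^ n)
      (z * deriv (₂F₁ a b c) z) := by
  refine (hasSum_nat_add_iff' 1).1 ?_
  convert! (hasSum_deriv_ordinaryHypergeometric a b c hz).mul_left z using 1
  · ext n
    push_cast
    ring
  · simp

theorem add_mul_ordinaryHypergeometricCoefficient_add_one (a b : 𝕂) {c : 𝕂}
    (hc : ∀ k : ℕ, c ≠ -k) (n : ℕ) :
    (c + n) * ordinaryHypergeometricCoefficient a b (c + 1) n =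
      c * ordinaryHypergeometricCoefficient a b c n := by
  have hpoch : (ascPochhammer 𝕂 n).eval c * (c + n) = c * (ascPochhammer 𝕂 n).eval (c + 1) := by
    simpa [ascPochhammer_succ_left] using (ascPochhammer_succ_eval n c).symm
  have hcn : c + n ≠ 0 := fun h ↦ hc n (eq_neg_of_add_eq_zero_left h)
  have hc₀ : (ascPochhammer 𝕂 n).eval c ≠ 0 := by
    rw [Ne, ascPochhammer_eval_eq_zero_iff]
    rintro ⟨k, -, hk⟩
    exact hc k (by rw [hk, neg_neg])
  have hc₁ : (ascPochhammer 𝕂 n).eval (c + 1) ≠ 0 :=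
    right_ne_zero_of_mul (hpoch ▸ mul_ne_zero hc₀ hcn)
  simp only [ordinaryHypergeometricCoefficient]
  field_simp
  linear_combination
    (ascPochhammer 𝕂 n).eval a * (ascPochhammer 𝕂 n).eval b * (n.factorial : 𝕂)⁻¹ * hpoch

theorem ordinaryHypergeometricCoefficient_succ_mul (a b : 𝕂) {c : 𝕂} (hc : ∀ k : ℕ, c ≠ -k)
    (n : ℕ) :
    (n + 1) * (c + n) * ordinaryHypergeometricCoefficient a b c (n + 1) =
      (a + n) * (b + n) * ordinaryHypergeometricCoefficient a b c n := by
  have hcn : c + n ≠ 0 := fun h ↦ hc n (eq_neg_of_add_eq_zero_left h)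
  have hn : (n + 1 : 𝕂) ≠ 0 := n.cast_add_one_ne_zero
  simp only [ordinaryHypergeometricCoefficient, ascPochhammer_succ_eval, Nat.factorial_succ,
    Nat.cast_mul, Nat.cast_succ, mul_inv]
  field_simp

theorem mul_ordinaryHypergeometric_eq_add_deriv (a b : 𝕂) {c : 𝕂} (hc : ∀ k : ℕ, c ≠ -k) {z : 𝕂}
    (hz : ‖z‖ < 1) :
    c * ₂F₁ a b c z = c * ₂F₁ a b (c + 1) z + z * deriv (₂F₁ a b (c + 1)) z := by
  refine ((hasSum_ordinaryHypergeometric a b c hz).mul_left c).unique ?_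
  convert! ((hasSum_ordinaryHypergeometric a b (c + 1) hz).mul_left c).add
    (hasSum_mul_deriv_ordinaryHypergeometric a b (c + 1) hz) using 2 with n
  linear_combination -z ^ n * add_mul_ordinaryHypergeometricCoefficient_add_one a b hc n

theorem mul_one_sub_mul_deriv_ordinaryHypergeometric (a b : 𝕂) {c : 𝕂}
    (hc : ∀ k : ℕ, c ≠ -k) {z : 𝕂} (hz : ‖z‖ < 1) :
    c * (1 - z) * deriv (₂F₁ a b c) z =
      (c - a) * (c - b) * ₂F₁ a b (c + 1) z + c * (a + b - c) * ₂F₁ a b c z := by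
  rw [show c * (1 - z) * deriv (₂F₁ a b c) z =
    c * (deriv (₂F₁ a b c) z - z * deriv (₂F₁ a b c) z) by ring]
  refine (((hasSum_deriv_ordinaryHypergeometric a b c hz).sub
    (hasSum_mul_deriv_ordinaryHypergeometric a b c hz)).mul_left c).unique ?_
  convert! ((hasSum_ordinaryHypergeometric a b (c + 1) hz).mul_left ((c - a) * (c - b))).add
    ((hasSum_ordinaryHypergeometric a b c hz).mul_left (c * (a + b - c))) using 2 with n
  have hcn : c + n ≠ 0 := fun h ↦ hc n (eq_neg_of_add_eq_zero_left h)
  refine mul_left_cancel₀ hcn ?_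
  linear_combination c * z ^ n * ordinaryHypergeometricCoefficient_succ_mul a b hc n -
    (c - a) * (c - b) * z ^ n * add_mul_ordinaryHypergeometricCoefficient_add_one a b hc n

end Hypergeometric

/-! ### Trigonometric forms of the hypergeometric function -/

theorem eqOn_cos_of_hasDerivAt {y h : ℝ → ℝ} {ω : ℝ} {s : Set ℝ} (hs : IsOpen s)
    (hs' : IsPreconnected s) (h0 : 0 ∈ s) (hy : ∀ x ∈ s, HasDerivAt y (-(ω ^ 2 * h x)) x)
    (hh : ∀ x ∈ s, HasDerivAt h (y x) x) (hy0 : y 0 = 1) (hh0 : h 0 = 0) :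
    Set.EqOn y (fun x ↦ cos (ω * x)) s := by
  have dcos (x : ℝ) : HasDerivAt (fun x ↦ cos (ω * x)) (-sin (ω * x) * ω) x := by
    simpa using ((hasDerivAt_id x).const_mul ω).cos
  have dsin (x : ℝ) : HasDerivAt (fun x ↦ sin (ω * x)) (cos (ω * x) * ω) x := by
    simpa using ((hasDerivAt_id x).const_mul ω).sin
  have const {f : ℝ → ℝ} (hf : ∀ x ∈ s, HasDerivAt f 0 x) {x : ℝ} (hx : x ∈ s) : f x = f 0 :=
    hs.is_const_of_deriv_eq_zero hs'
      (fun x hx ↦ (hf x hx).differentiableAt.differentiableWithinAt)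
      (fun x hx ↦ (hf x hx).deriv) hx h0
  intro x hx
  have hp : y x * cos (ω * x) + ω * h x * sin (ω * x) = 1 := by
    have := const (f := fun x ↦ y x * cos (ω * x) + ω * h x * sin (ω * x)) (fun x hx ↦
      (((hy x hx).fun_mul (dcos x)).fun_add (((hh x hx).const_mul ω).fun_mul (dsin x))).congr_deriv
        (by ring)) hx
    simpa [hy0, hh0] using this
  have hq : y x * sin (ω * x) - ω * h x * cos (ω * x) = 0 := by
    have := const (f := fun x ↦ y x * sin (ω * x) - ω * h x * cos (ω * x)) (fun x hx ↦
      (((hy x hx).fun_mul (dsin x)).fun_sub (((hh x hx).const_mul ω).fun_mul (dcos x))).congr_deriv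
        (by ring)) hx
    simpa [hh0] using this
  linear_combination cos (ω * x) * hp + sin (ω * x) * hq - y x * sin_sq_add_cos_sq (ω * x)

theorem ordinaryHypergeometric_half_sin_sq (a : ℝ) {x : ℝ} (hx : x ∈ Set.Ioo (-(π / 2)) (π / 2)) :
    ₂F₁ ((1 - a) / 2) ((1 + a) / 2) (1 / 2) (sin x ^ 2) = cos (a * x) / cos x := by
  set F : ℝ → ℝ := ₂F₁ ((1 - a) / 2) ((1 + a) / 2) (1 / 2)
  set E : ℝ → ℝ := ₂F₁ ((1 - a) / 2) ((1 + a) / 2) (1 / 2 + 1)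
  have hhalf (k : ℕ) : (1 / 2 : ℝ) ≠ -k := by
    have : (0 : ℝ) ≤ k := k.cast_nonneg
    linarith
  have hnorm {x : ℝ} (hx : x ∈ Set.Ioo (-(π / 2)) (π / 2)) : ‖sin x ^ 2‖ < 1 := by
    have hcos := cos_pos_of_mem_Ioo hx
    rw [norm_of_nonneg (sq_nonneg _), sin_sq]
    nlinarith
  have dsin (x : ℝ) : HasDerivAt (fun x ↦ sin x ^ 2) (2 * sin x * cos x) x := by
    simpa using (hasDerivAt_sin x).fun_pow 2
  have dcomp (c : ℝ) {x : ℝ} (hx : x ∈ Set.Ioo (-(π / 2)) (π / 2)) :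
      HasDerivAt (fun x ↦ ₂F₁ ((1 - a) / 2) ((1 + a) / 2) c (sin x ^ 2))
        (deriv (₂F₁ ((1 - a) / 2) ((1 + a) / 2) c) (sin x ^ 2) * (2 * sin x * cos x)) x :=
    (hasDerivAt_ordinaryHypergeometric _ _ _ (hnorm hx)).differentiableAt.hasDerivAt.comp x (dsin x)
  -- For `y = cos x · F(sin² x)` and `h = sin x · E(sin² x)` the two contiguous relations become
  -- the first-order system solved by `cos (a x)` and `sin (a x) / a`.
  have key := eqOn_cos_of_hasDerivAt (y := fun x ↦ cos x * F (sin x ^ 2))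
    (h := fun x ↦ sin x * E (sin x ^ 2)) (ω := a) isOpen_Ioo isPreconnected_Ioo
    (by constructor <;> linarith [pi_pos])
    (fun x hx ↦ ((hasDerivAt_cos x).fun_mul (dcomp _ hx)).congr_deriv ?_)
    (fun x hx ↦ ((hasDerivAt_sin x).fun_mul (dcomp _ hx)).congr_deriv ?_)
    (by simp [F]) (by simp) hx
  · rw [eq_div_iff (cos_pos_of_mem_Ioo hx).ne', mul_comm]
    exact key
  · have := mul_one_sub_mul_deriv_ordinaryHypergeometric ((1 - a) / 2) ((1 + a) / 2) hhalf
      (hnorm hx)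
    rw [← cos_sq'] at this
    linear_combination 4 * sin x * this
  · have := mul_ordinaryHypergeometric_eq_add_deriv ((1 - a) / 2) ((1 + a) / 2) hhalf
      (hnorm hx)
    linear_combination -2 * cos x * this

theorem ordinaryHypergeometricCoefficient_one_eq {𝕂 : Type*} [RCLike 𝕂] (a b : 𝕂) (n : ℕ) :
    ordinaryHypergeometricCoefficient a b 1 n =
      ordinaryHypergeometricCoefficient a b (1 / 2) n *
        ((ascPochhammer 𝕂 n).eval (1 / 2) / n.factorial) := by
  have hhalf : (ascPochhammer 𝕂 n).eval (1 / 2) ≠ 0 := by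
    rw [Ne, ascPochhammer_eval_eq_zero_iff]
    rintro ⟨k, -, hk⟩
    have h : ((2 * k + 1 : ℕ) : 𝕂) = 0 := by
      push_cast
      linear_combination 2 * hk
    exact (2 * k).succ_ne_zero (Nat.cast_eq_zero.1 h)
  simp only [ordinaryHypergeometricCoefficient, ascPochhammer_eval_one]
  field_simp

theorem integral_cos_sq_pow_zero_pi_div_two (n : ℕ) :
    ∫ θ in 0..π / 2, (cos θ ^ 2) ^ n =
      π / 2 * ((ascPochhammer ℝ n).eval (1 / 2) / n.factorial) := by
  have hprod : ∏ i ∈ Finset.range n, (2 * (i : ℝ) + 1) / (2 * i + 2) =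
      (ascPochhammer ℝ n).eval (1 / 2) / n.factorial := by
    induction n with
    | zero => simp
    | succ n ih =>
      rw [Finset.prod_range_succ, ih, ascPochhammer_succ_eval, Nat.factorial_succ]
      push_cast
      field_simp
      ring
  simp only [← pow_mul]
  rw [EulerSine.integral_cos_pow_eq, integral_sin_pow_even, hprod]
  ring

theorem abs_mul_cos_sq_le (z θ : ℝ) : |z * cos θ ^ 2| ≤ |z| := by
  rw [abs_mul, abs_of_nonneg (sq_nonneg (cos θ))]
  exact mul_le_of_le_one_right (abs_nonneg z) (cos_sq_le_one θ)

theorem continuous_ordinaryHypergeometric_mul_cos_sq (a b c : ℝ) {z : ℝ} (hz : |z| < 1) :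
    Continuous fun θ ↦ ₂F₁ a b c (z * cos θ ^ 2) :=
  continuous_iff_continuousAt.2 fun θ ↦
    (hasDerivAt_ordinaryHypergeometric a b c
      ((abs_mul_cos_sq_le z θ).trans_lt hz)).continuousAt.comp
      (f := fun θ ↦ z * cos θ ^ 2) (by fun_prop)

theorem ordinaryHypergeometric_one_eq_integral (a b : ℝ) {z : ℝ} (hz : |z| < 1) :
    ₂F₁ a b 1 z = 2 / π * ∫ θ in 0..π / 2, ₂F₁ a b (1 / 2) (z * cos θ ^ 2) := by
  set u := ordinaryHypergeometricCoefficient a b (1 / 2)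
  have hbound (n : ℕ) (θ : ℝ) : ‖u n * (z * cos θ ^ 2) ^ n‖ ≤ ‖u n‖ * |z| ^ n := by
    rw [norm_mul, norm_pow]
    exact mul_le_mul_of_nonneg_left (pow_le_pow_left₀ (abs_nonneg _) (abs_mul_cos_sq_le z θ) n)
      (norm_nonneg _)
  have hint : HasSum (fun n ↦ ∫ θ in 0..π / 2, u n * (z * cos θ ^ 2) ^ n)
      (∫ θ in 0..π / 2, ₂F₁ a b (1 / 2) (z * cos θ ^ 2)) :=
    intervalIntegral.hasSum_integral_of_dominated_convergence (fun n _ ↦ ‖u n‖ * |z| ^ n)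
      (fun n ↦ by fun_prop) (fun n ↦ .of_forall fun θ _ ↦ hbound n θ)
      (.of_forall fun _ _ ↦
        summable_norm_ordinaryHypergeometricCoefficient_mul_pow a b _ (abs_nonneg z) hz)
      intervalIntegrable_const
      (.of_forall fun θ _ ↦
        hasSum_ordinaryHypergeometric a b _ ((abs_mul_cos_sq_le z θ).trans_lt hz))
  refine (hasSum_ordinaryHypergeometric a b 1 hz).unique ?_
  convert! hint.mul_left (2 / π) using 2 with n
  simp only [mul_pow z, ← mul_assoc (u n), intervalIntegral.integral_const_mul,
    integral_cos_sq_pow_zero_pi_div_two]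
  rw [ordinaryHypergeometricCoefficient_one_eq]
  have hπ : 2 / π * (π / 2) = 1 := by field_simp
  linear_combination
    -u n * z ^ n * ((ascPochhammer ℝ n).eval (1 / 2) / n.factorial) * hπ

/-! ### The lemniscate -/

theorem beta_eq_integral {α β : ℝ} (hα : 0 < α) (hβ : 0 < β) :
    ProbabilityTheory.beta α β = ∫ x in 0..1, x ^ (α - 1) * (1 - x) ^ (β - 1) := by
  rw [ProbabilityTheory.beta_eq_betaIntegralReal α β hα hβ, Complex.betaIntegral]
  have h : ∫ x : ℝ in 0..1, (x : ℂ) ^ ((α : ℂ) - 1) * (1 - x) ^ ((β : ℂ) - 1) =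
      ∫ x : ℝ in 0..1, ((x ^ (α - 1) * (1 - x) ^ (β - 1) : ℝ) : ℂ) := by
    refine intervalIntegral.integral_congr fun x hx ↦ ?_
    rw [Set.uIcc_of_le zero_le_one] at hx
    push_cast [Complex.ofReal_cpow hx.1, Complex.ofReal_cpow (sub_nonneg.2 hx.2)]
    rfl
  rw [h, intervalIntegral.integral_ofReal, Complex.ofReal_re]

theorem beta_one_quarter_one_half :
    ProbabilityTheory.beta (1 / 4) (1 / 2) = Gamma (1 / 4) ^ 2 / √(2 * π) := by
  have h2 : √2 ^ 2 = 2 := sq_sqrt zero_le_two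
  have hπ : √π ^ 2 = π := sq_sqrt pi_nonneg
  have hrefl : Gamma (1 / 4) * Gamma (1 / 4 + 1 / 2) = π * √2 := by
    rw [show (1 / 4 + 1 / 2 : ℝ) = 1 - 1 / 4 by norm_num, Gamma_mul_Gamma_one_sub, mul_one_div,
      sin_pi_div_four]
    field_simp
    exact h2.symm
  have hΓ : Gamma (1 / 4 + 1 / 2) ≠ 0 := (Gamma_pos_of_pos (by norm_num)).ne'
  rw [ProbabilityTheory.beta, Gamma_one_half_eq, sqrt_mul zero_le_two,
    div_eq_div_iff hΓ (by positivity)]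
  linear_combination Gamma (1 / 4) * √2 * hπ - Gamma (1 / 4) * hrefl

/-- The inverse lemniscate sine `∫₀ᵗ du / √(1 - u⁴)`, written with `u = sin ψ` so that the
integrand stays bounded up to `t = 1`. It is constant to the right of `1` and to the left
of `-1`. -/
noncomputable def lemniscateArcsin (t : ℝ) : ℝ :=
  ∫ ψ in 0..arcsin t, 1 / √(1 + sin ψ ^ 2)

theorem continuous_one_div_sqrt_one_add_sin_sq : Continuous fun ψ : ℝ ↦ 1 / √(1 + sin ψ ^ 2) :=
  continuous_const.div (by fun_prop) fun ψ ↦ by positivity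

theorem lemniscateArcsin_zero : lemniscateArcsin 0 = 0 := by
  simp [lemniscateArcsin]

theorem continuous_lemniscateArcsin : Continuous lemniscateArcsin :=
  (intervalIntegral.continuous_primitive
    (fun _ _ ↦ continuous_one_div_sqrt_one_add_sin_sq.intervalIntegrable _ _) 0).comp
      continuous_arcsin

theorem hasDerivAt_lemniscateArcsin {t : ℝ} (ht : t ∈ Set.Ioo (-1) 1) :
    HasDerivAt lemniscateArcsin (1 / √(1 - t ^ 4)) t := by
  have hprim := continuous_one_div_sqrt_one_add_sin_sq.integral_hasStrictDerivAt 0 (arcsin t)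
  refine (hprim.hasDerivAt.comp t (hasDerivAt_arcsin ht.1.ne' ht.2.ne)).congr_deriv ?_
  rw [sin_arcsin ht.1.le ht.2.le, div_mul_div_comm, ← sqrt_mul (by positivity)]
  ring_nf

theorem hasDerivAt_lemniscateArcsin_rpow {x : ℝ} (hx : x ∈ Set.Ioo 0 1) :
    HasDerivAt (fun x ↦ 4 * lemniscateArcsin (x ^ (1 / 4 : ℝ)))
      (x ^ (1 / 4 - 1 : ℝ) * (1 - x) ^ (1 / 2 - 1 : ℝ)) x := by
  have hroot : x ^ (1 / 4 : ℝ) ∈ Set.Ioo (-1) 1 :=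
    ⟨neg_one_lt_zero.trans (rpow_pos_of_pos hx.1 _), rpow_lt_one hx.1.le hx.2 (by norm_num)⟩
  have hpow : (x ^ (1 / 4 : ℝ)) ^ 4 = x := by
    rw [← rpow_mul_natCast hx.1.le]
    norm_num
  refine (((hasDerivAt_lemniscateArcsin hroot).comp x
    (hasDerivAt_rpow_const (.inl hx.1.ne'))).const_mul 4).congr_deriv ?_
  rw [hpow, sqrt_eq_rpow, one_div, ← rpow_neg (sub_nonneg.2 hx.2.le)]
  ring_nf

theorem four_mul_lemniscateArcsin_one :
    4 * lemniscateArcsin 1 = ProbabilityTheory.beta (1 / 4) (1 / 2) := by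
  have hcont : Continuous fun x : ℝ ↦ 4 * lemniscateArcsin (x ^ (1 / 4 : ℝ)) :=
    (continuous_lemniscateArcsin.comp (continuous_rpow_const (by norm_num))).const_mul 4
  have hint := intervalIntegral.intervalIntegrable_deriv_of_nonneg (a := 0) (b := 1)
    hcont.continuousOn
    (fun x hx ↦ hasDerivAt_lemniscateArcsin_rpow (by simpa using hx))
    (fun x hx ↦ by
      simp only [zero_le_one, inf_of_le_left, sup_of_le_right] at hx
      have := sub_pos.2 hx.2
      have := hx.1
      positivity)
  rw [beta_eq_integral (by norm_num) (by norm_num),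
    intervalIntegral.integral_eq_sub_of_hasDerivAt_of_le zero_le_one hcont.continuousOn
      (fun x hx ↦ hasDerivAt_lemniscateArcsin_rpow hx) hint]
  simp [lemniscateArcsin_zero]

theorem lemniscateArcsin_one : lemniscateArcsin 1 = Gamma (1 / 4) ^ 2 / (4 * √(2 * π)) := by
  linear_combination (four_mul_lemniscateArcsin_one + beta_one_quarter_one_half) / 4

/-! ### Trisection of angles and the 3-isogeny -/

/-- The sine of a third of the angle with sine `s`: the branch with `trisectSin 0 = 0` of the
solution `w` of `3 w - 4 w³ = s`. It is constant outside `[-1, 1]`. -/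
noncomputable def trisectSin (s : ℝ) : ℝ :=
  sin (1 / 3 * arcsin s)

theorem trisectSin_zero : trisectSin 0 = 0 := by
  simp [trisectSin]

theorem continuous_trisectSin : Continuous trisectSin :=
  continuous_sin.comp (continuous_arcsin.const_mul _)

theorem hasDerivAt_sin_mul_arcsin (a : ℝ) {s : ℝ} (hs : s ∈ Set.Ioo (-1) 1) :
    HasDerivAt (fun s ↦ sin (a * arcsin s))
      (a * ₂F₁ ((1 - a) / 2) ((1 + a) / 2) (1 / 2) (s ^ 2)) s := by
  refine ((hasDerivAt_arcsin hs.1.ne' hs.2.ne).const_mul a).sin.congr_deriv ?_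
  have h := ordinaryHypergeometric_half_sin_sq a (x := arcsin s)
    ⟨neg_pi_div_two_lt_arcsin.2 hs.1, arcsin_lt_pi_div_two.2 hs.2⟩
  rw [sin_arcsin hs.1.le hs.2.le, cos_arcsin] at h
  rw [h]
  ring

theorem hasDerivAt_trisectSin {s : ℝ} (hs : s ∈ Set.Ioo (-1) 1) :
    HasDerivAt trisectSin (₂F₁ (1 / 3) (2 / 3) (1 / 2 : ℝ) (s ^ 2) / 3) s := by
  refine (hasDerivAt_sin_mul_arcsin (1 / 3) hs).congr_deriv ?_
  rw [show (1 - 1 / 3 : ℝ) / 2 = 1 / 3 by norm_num, show (1 + 1 / 3 : ℝ) / 2 = 2 / 3 by norm_num]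
  ring

theorem three_mul_trisectSin_sub {s : ℝ} (hs : s ∈ Set.Icc (-1) 1) :
    3 * trisectSin s - 4 * trisectSin s ^ 3 = s := by
  rw [trisectSin, ← sin_three_mul, ← mul_assoc,
    mul_one_div_cancel three_ne_zero, one_mul, sin_arcsin hs.1 hs.2]

theorem trisectSin_mem_Ico {s : ℝ} (hs : s ∈ Set.Ico 0 1) : trisectSin s ∈ Set.Ico 0 (1 / 2) := by
  have h₀ : 0 ≤ arcsin s := arcsin_nonneg.2 hs.1
  have h₁ : arcsin s < π / 2 := arcsin_lt_pi_div_two.2 hs.2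
  refine ⟨sin_nonneg_of_nonneg_of_le_pi (by positivity) (by linarith), ?_⟩
  rw [trisectSin, ← sin_pi_div_six]
  exact sin_lt_sin_of_lt_of_le_pi_div_two (by linarith) (by linarith) (by linarith)

/-- The denominator of the `3`-isogeny `X = v / isogenyDenom z v` from the curve
`y² = v (z - v (3 - 4 v)²)` to `Y² = X (1 - 27 (1 + 8 z) X² + 54 (8 z² + 20 z - 1) X³)`. -/
def isogenyDenom (z v : ℝ) : ℝ :=
  z - 3 * v + 48 * v ^ 2 - 64 * v ^ 3

theorem hasDerivAt_isogenyDenom (z v : ℝ) :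
    HasDerivAt (isogenyDenom z) (-3 + 96 * v - 192 * v ^ 2) v := by
  refine (((((hasDerivAt_id v).const_mul 3).const_sub z).add
    ((hasDerivAt_pow 2 v).const_mul 48)).sub ((hasDerivAt_pow 3 v).const_mul 64)).congr_deriv ?_
  push_cast
  ring

/-- The numerator `P - v ∂P/∂v` of the derivative in `v` of the `3`-isogeny `v / P`, where
`P = isogenyDenom z v`. -/
def isogenyWronskian (z v : ℝ) : ℝ :=
  z - 48 * v ^ 2 + 128 * v ^ 3

theorem isogenyWronskian_sq_mul (z v : ℝ) :
    isogenyWronskian z v ^ 2 * (z - v * (3 - 4 * v) ^ 2) =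
      isogenyDenom z v ^ 3 - 27 * (1 + 8 * z) * isogenyDenom z v * v ^ 2 +
        54 * (8 * z ^ 2 + 20 * z - 1) * v ^ 3 := by
  rw [isogenyWronskian, isogenyDenom]
  ring

theorem isogenyDenom_pos {z v : ℝ} (hz : 0 < z) (hv : v ∈ Set.Icc 0 (1 / 4))
    (hvz : v * (3 - 4 * v) ^ 2 ≤ z) : 0 < isogenyDenom z v := by
  obtain rfl | hv₀ := hv.1.eq_or_lt
  · simpa [isogenyDenom] using hz
  have hlower : 6 * v * (1 + 4 * v - 8 * v ^ 2) ≤ isogenyDenom z v := by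
    rw [isogenyDenom]
    linarith
  have hfactor : 0 < 1 + 4 * v - 8 * v ^ 2 := by nlinarith [hv.2]
  exact hlower.trans_lt' (by positivity)

theorem isogenyWronskian_pos {z v : ℝ} (hz : 0 < z) (hv : v ∈ Set.Ico 0 (1 / 4))
    (hvz : v * (3 - 4 * v) ^ 2 ≤ z) : 0 < isogenyWronskian z v := by
  obtain rfl | hv₀ := hv.1.eq_or_lt
  · simpa [isogenyWronskian] using hz
  have hlower : 9 * v * (1 - 4 * v) ^ 2 ≤ isogenyWronskian z v := by
    rw [isogenyWronskian]
    linarith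
  have hfactor : 0 < 1 - 4 * v := by linarith [hv.2]
  exact hlower.trans_lt' (by positivity)

/-- The rescaled root `κ √X` of the `3`-isogeny `X = v / isogenyDenom z v`, as a function of
`w = √v`. When `8 z² + 20 z = 1` and `κ⁴ = 27 (1 + 8 z)` it pulls the lemniscatic differential
`dT / √(1 - T⁴)` back to `κ dw / √(z - (3 w - 4 w³)²)`. -/
noncomputable def lemniscateCoord (z κ w : ℝ) : ℝ :=
  κ * w / √(isogenyDenom z (w ^ 2))

section LemniscateCoord

variable {z κ w : ℝ}

theorem lemniscateCoord_zero : lemniscateCoord z κ 0 = 0 := by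
  simp [lemniscateCoord]

theorem lemniscateCoord_nonneg (hκ : 0 ≤ κ) (hw : 0 ≤ w) : 0 ≤ lemniscateCoord z κ w := by
  rw [lemniscateCoord]
  positivity

theorem hasDerivAt_lemniscateCoord (hP : 0 < isogenyDenom z (w ^ 2)) :
    HasDerivAt (lemniscateCoord z κ)
      (κ * isogenyWronskian z (w ^ 2) / √(isogenyDenom z (w ^ 2)) ^ 3) w := by
  have hdenom : HasDerivAt (fun w ↦ isogenyDenom z (w ^ 2))
      ((-3 + 96 * w ^ 2 - 192 * (w ^ 2) ^ 2) * (2 * w)) w := by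
    simpa [Function.comp_def] using
      (hasDerivAt_isogenyDenom z (w ^ 2)).comp w (hasDerivAt_pow 2 w)
  refine (((hasDerivAt_id w).const_mul κ).div (hdenom.sqrt hP.ne')
    (sqrt_ne_zero'.2 hP)).congr_deriv ?_
  have hsq : √(isogenyDenom z (w ^ 2)) ^ 2 = isogenyDenom z (w ^ 2) := sq_sqrt hP.le
  have hwron : isogenyWronskian z (w ^ 2) = isogenyDenom z (w ^ 2) -
      w ^ 2 * (-3 + 96 * w ^ 2 - 192 * (w ^ 2) ^ 2) := by
    rw [isogenyWronskian, isogenyDenom]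
    ring
  have := (sqrt_pos.2 hP).ne'
  field_simp
  rw [hwron, id, hsq]
  ring

theorem one_sub_lemniscateCoord_pow_four (hz : 8 * z ^ 2 + 20 * z = 1)
    (hκ : κ ^ 4 = 27 * (1 + 8 * z)) (hP : 0 < isogenyDenom z (w ^ 2)) :
    1 - lemniscateCoord z κ w ^ 4 =
      isogenyWronskian z (w ^ 2) ^ 2 * (z - (3 * w - 4 * w ^ 3) ^ 2) /
        isogenyDenom z (w ^ 2) ^ 3 := by
  have hsqrt : √(isogenyDenom z (w ^ 2)) ^ 4 = isogenyDenom z (w ^ 2) ^ 2 := by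
    rw [pow_mul _ 2 2, sq_sqrt hP.le]
  have hcurve := isogenyWronskian_sq_mul z (w ^ 2)
  rw [lemniscateCoord, div_pow, mul_pow, hsqrt, hκ]
  field_simp
  linear_combination -hcurve - 54 * w ^ 6 * hz

theorem isogenyDenom_sq_pos (hz₀ : 0 < z) (hw : w ∈ Set.Icc 0 (1 / 2))
    (hwz : (3 * w - 4 * w ^ 3) ^ 2 ≤ z) : 0 < isogenyDenom z (w ^ 2) :=
  isogenyDenom_pos hz₀ ⟨sq_nonneg w, by nlinarith [hw.1, hw.2]⟩ (by linarith)

theorem lemniscateCoord_eq_one (hz₀ : 0 < z) (hz : 8 * z ^ 2 + 20 * z = 1) (hκ₀ : 0 ≤ κ)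
    (hκ : κ ^ 4 = 27 * (1 + 8 * z)) (hw : w ∈ Set.Icc 0 (1 / 2))
    (hwz : (3 * w - 4 * w ^ 3) ^ 2 = z) : lemniscateCoord z κ w = 1 := by
  have h := one_sub_lemniscateCoord_pow_four hz hκ (isogenyDenom_sq_pos hz₀ hw hwz.le)
  rw [hwz, sub_self, mul_zero, zero_div, sub_eq_zero] at h
  exact (pow_eq_one_iff_of_nonneg (lemniscateCoord_nonneg hκ₀ hw.1) four_ne_zero).1 h.symm

theorem hasDerivAt_lemniscateArcsin_lemniscateCoord (hz₀ : 0 < z) (hz : 8 * z ^ 2 + 20 * z = 1)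
    (hκ₀ : 0 ≤ κ) (hκ : κ ^ 4 = 27 * (1 + 8 * z)) (hw : w ∈ Set.Ico 0 (1 / 2))
    (hwz : (3 * w - 4 * w ^ 3) ^ 2 < z) :
    HasDerivAt (fun w ↦ lemniscateArcsin (lemniscateCoord z κ w))
      (κ / √(z - (3 * w - 4 * w ^ 3) ^ 2)) w := by
  have hP := isogenyDenom_sq_pos hz₀ (Set.Ico_subset_Icc_self hw) hwz.le
  have hQ : 0 < isogenyWronskian z (w ^ 2) :=
    isogenyWronskian_pos hz₀ ⟨sq_nonneg w, by nlinarith [hw.1, hw.2]⟩ (by linarith)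
  have hS : 0 < z - (3 * w - 4 * w ^ 3) ^ 2 := sub_pos.2 hwz
  have hquartic := one_sub_lemniscateCoord_pow_four hz hκ hP
  have hT₀ := lemniscateCoord_nonneg (z := z) hκ₀ hw.1
  have hT₁ : lemniscateCoord z κ w < 1 := by
    refine lt_of_pow_lt_pow_left₀ 4 zero_le_one ?_
    rw [one_pow, ← sub_pos, hquartic]
    positivity
  refine ((hasDerivAt_lemniscateArcsin ⟨neg_one_lt_zero.trans_le hT₀, hT₁⟩).comp w
    (hasDerivAt_lemniscateCoord hP)).congr_deriv ?_
  have hcube : √(isogenyDenom z (w ^ 2) ^ 3) = √(isogenyDenom z (w ^ 2)) ^ 3 := by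
    rw [sqrt_eq_iff_eq_sq (by positivity) (by positivity), ← pow_mul, mul_comm, pow_mul,
      sq_sqrt hP.le]
  rw [hquartic, sqrt_div' _ (by positivity), sqrt_mul (sq_nonneg _), sqrt_sq hQ.le, hcube]
  have := (sqrt_pos.2 hS).ne'
  have := (sqrt_pos.2 hP).ne'
  field_simp

end LemniscateCoord

/-! ### The lemniscatic value -/

section LemniscaticPeriod

variable {z κ : ℝ}

theorem sqrt_mul_cos_mem_Ico (hz : z < 1) {θ : ℝ} (hθ : θ ∈ Set.Icc 0 (π / 2)) :
    √z * cos θ ∈ Set.Ico 0 1 := by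
  have hcos : 0 ≤ cos θ := cos_nonneg_of_mem_Icc ⟨by linarith [hθ.1, pi_pos], hθ.2⟩
  exact ⟨by positivity, mul_lt_one_of_nonneg_of_lt_one_left (sqrt_nonneg z)
    ((sqrt_lt' one_pos).2 (by rwa [one_pow])) (cos_le_one θ)⟩

theorem continuousOn_lemniscateArcsin_trisectSin (hz₀ : 0 < z) (hz₁ : z < 1) :
    ContinuousOn
      (fun θ ↦ lemniscateArcsin (lemniscateCoord z κ (trisectSin (√z * cos θ))))
      (Set.Icc 0 (π / 2)) := by
  intro θ hθ
  have hs := sqrt_mul_cos_mem_Ico hz₁ hθ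
  have hP : 0 < isogenyDenom z (trisectSin (√z * cos θ) ^ 2) := by
    refine isogenyDenom_sq_pos hz₀ (Set.Ico_subset_Icc_self (trisectSin_mem_Ico hs)) ?_
    rw [three_mul_trisectSin_sub ⟨by linarith [hs.1], hs.2.le⟩, mul_pow, sq_sqrt hz₀.le]
    exact mul_le_of_le_one_right hz₀.le (cos_sq_le_one θ)
  have hs_cont : Continuous fun θ ↦ trisectSin (√z * cos θ) :=
    continuous_trisectSin.comp (by fun_prop)
  have hcoord : ContinuousAt (fun θ ↦ lemniscateCoord z κ (trisectSin (√z * cos θ))) θ :=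
    (hasDerivAt_lemniscateCoord hP).continuousAt.comp
      (f := fun θ ↦ trisectSin (√z * cos θ)) hs_cont.continuousAt
  exact (continuous_lemniscateArcsin.continuousAt.comp hcoord).continuousWithinAt

theorem hasDerivAt_lemniscateArcsin_trisectSin (hz₀ : 0 < z)
    (hz : 8 * z ^ 2 + 20 * z = 1) (hκ₀ : 0 ≤ κ) (hκ : κ ^ 4 = 27 * (1 + 8 * z)) {θ : ℝ}
    (hθ : θ ∈ Set.Ioo 0 (π / 2)) :
    HasDerivAt (fun θ ↦ lemniscateArcsin (lemniscateCoord z κ (trisectSin (√z * cos θ))))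
      (-(κ / 3) * ₂F₁ (1 / 3) (2 / 3) (1 / 2 : ℝ) (z * cos θ ^ 2)) θ := by
  have hz₁ : z < 1 := by nlinarith
  have hs := sqrt_mul_cos_mem_Ico hz₁ (Set.Ioo_subset_Icc_self hθ)
  have hsin : 0 < sin θ := sin_pos_of_pos_of_lt_pi hθ.1 (by linarith [hθ.2, pi_pos])
  have hsq : (√z * cos θ) ^ 2 = z * cos θ ^ 2 := by rw [mul_pow, sq_sqrt hz₀.le]
  have hcubic : 3 * trisectSin (√z * cos θ) - 4 * trisectSin (√z * cos θ) ^ 3 = √z * cos θ :=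
    three_mul_trisectSin_sub ⟨by linarith [hs.1], hs.2.le⟩
  have hgap : z - (√z * cos θ) ^ 2 = z * sin θ ^ 2 := by
    rw [hsq]
    linear_combination -z * sin_sq_add_cos_sq θ
  have hlt : (√z * cos θ) ^ 2 < z := by
    rw [← sub_pos, hgap]
    positivity
  have houter := hasDerivAt_lemniscateArcsin_lemniscateCoord hz₀ hz hκ₀ hκ
    (trisectSin_mem_Ico hs) (by rwa [hcubic])
  have hinner := (hasDerivAt_trisectSin ⟨by linarith [hs.1], hs.2⟩).comp θ
    ((hasDerivAt_cos θ).const_mul √z)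
  refine (houter.comp θ hinner).congr_deriv ?_
  rw [hcubic, hgap, hsq, sqrt_mul hz₀.le, sqrt_sq hsin.le]
  have := (sqrt_pos.2 hz₀).ne'
  field_simp

theorem integral_ordinaryHypergeometric_mul_cos_sq_eq_lemniscateArcsin (hz₀ : 0 < z)
    (hz : 8 * z ^ 2 + 20 * z = 1) (hκ₀ : 0 < κ) (hκ : κ ^ 4 = 27 * (1 + 8 * z)) :
    ∫ θ in 0..π / 2, ₂F₁ (1 / 3) (2 / 3) (1 / 2 : ℝ) (z * cos θ ^ 2) =
      3 / κ * lemniscateArcsin 1 := by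
  have hz₁ : z < 1 := by nlinarith
  have hF := continuous_ordinaryHypergeometric_mul_cos_sq (1 / 3) (2 / 3) (1 / 2)
    (by rwa [abs_of_pos hz₀] : |z| < 1)
  have hleft : lemniscateCoord z κ (trisectSin √z) = 1 := by
    have hs : √z ∈ Set.Ico 0 1 := by
      simpa using sqrt_mul_cos_mem_Ico hz₁ (Set.left_mem_Icc.2 pi_div_two_pos.le)
    refine lemniscateCoord_eq_one hz₀ hz hκ₀.le hκ
      (Set.Ico_subset_Icc_self (trisectSin_mem_Ico hs)) ?_
    rw [three_mul_trisectSin_sub ⟨by linarith [hs.1], hs.2.le⟩, sq_sqrt hz₀.le]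
  have hFTC := intervalIntegral.integral_eq_sub_of_hasDerivAt_of_le pi_div_two_pos.le
    (continuousOn_lemniscateArcsin_trisectSin (κ := κ) hz₀ hz₁)
    (fun θ hθ ↦ hasDerivAt_lemniscateArcsin_trisectSin hz₀ hz hκ₀.le hκ hθ)
    ((hF.const_mul _).intervalIntegrable _ _)
  rw [intervalIntegral.integral_const_mul, cos_pi_div_two, cos_zero, mul_zero, mul_one, hleft,
    trisectSin_zero, lemniscateCoord_zero, lemniscateArcsin_zero] at hFTC
  field_simp
  linear_combination -3 * hFTC

end LemniscaticPeriod

theorem ordinaryHypergeometric_eq_Gamma_of_lemniscatic {z κ : ℝ} (hz₀ : 0 < z)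
    (hz : 8 * z ^ 2 + 20 * z = 1) (hκ₀ : 0 < κ) (hκ : κ ^ 4 = 27 * (1 + 8 * z)) :
    ₂F₁ (1 / 3) (2 / 3) (1 : ℝ) z = 3 / κ * (Gamma (1 / 4) ^ 2 / (2 * π) ^ (3 / 2 : ℝ)) := by
  have hpow : (2 * π) ^ (3 / 2 : ℝ) = 2 * π * √(2 * π) := by
    rw [sqrt_eq_rpow, ← rpow_one_add' (by positivity) (by norm_num)]
    norm_num
  have hz₁ : |z| < 1 := by
    rw [abs_of_pos hz₀]
    nlinarith
  rw [ordinaryHypergeometric_one_eq_integral _ _ hz₁,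
    integral_ordinaryHypergeometric_mul_cos_sq_eq_lemniscateArcsin hz₀ hz hκ₀ hκ,
    lemniscateArcsin_one, hpow]
  field_simp
  norm_num

theorem hyp2F1_eq_ordinaryHypergeometric (a b c z : ℝ) : hyp2F1 a b c z = ₂F₁ a b c z := by
  rw [ordinaryHypergeometric_eq_tsum]
  refine tsum_congr fun n ↦ ?_
  rw [smul_eq_mul]
  ring

theorem three_mul_rpow_div_sqrt_pow_four :
    (3 * (2 * √3) ^ (1 / 4 : ℝ) / √(√3 + 1)) ^ 4 = 81 * (2 * √3 - 3) := by
  have h3 : √3 ^ 2 = 3 := sq_sqrt zero_le_three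
  have hroot : ((2 * √3) ^ (1 / 4 : ℝ)) ^ 4 = 2 * √3 := by
    rw [← rpow_mul_natCast (by positivity)]
    norm_num
  have hsqrt : √(√3 + 1) ^ 4 = (√3 + 1) ^ 2 := by
    rw [pow_mul _ 2 2, sq_sqrt (by positivity)]
  rw [div_pow, mul_pow, hroot, hsqrt, div_eq_iff (by positivity)]
  linear_combination (-162 * √3 - 81) * h3

/-- Berndt–Chan evaluation, rewritten form. -/
theorem berndt_chan_evaluation :
    hyp2F1 (1/3) (2/3) 1 ((3 * Real.sqrt 3 - 5) / 4) =
      (2 * Real.sqrt 3) ^ (-(1:ℝ)/4) *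
        (Real.sqrt (Real.sqrt 3 + 1) / (2 * π) ^ ((3:ℝ)/2)) *
        Real.Gamma (1/4) ^ 2 := by
  have h3 : √3 ^ 2 = 3 := sq_sqrt zero_le_three
  have hz₀ : 0 < (3 * √3 - 5) / 4 := by nlinarith [sqrt_nonneg 3]
  have hz : 8 * ((3 * √3 - 5) / 4) ^ 2 + 20 * ((3 * √3 - 5) / 4) = 1 := by
    linear_combination 9 / 2 * h3
  have hκ : (3 * (2 * √3) ^ (1 / 4 : ℝ) / √(√3 + 1)) ^ 4 = 27 * (1 + 8 * ((3 * √3 - 5) / 4)) := by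
    rw [three_mul_rpow_div_sqrt_pow_four]
    ring
  rw [hyp2F1_eq_ordinaryHypergeometric,
    ordinaryHypergeometric_eq_Gamma_of_lemniscatic hz₀ hz (by positivity) hκ, neg_div,
    rpow_neg (by positivity)]
  field_simp
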